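/- Let 0<u_-<u_+<1 with u_-+u_+=1 and let {(u_ℓ,φ_ℓ)}_{ℓ>0} ⊂ X satisfy limsup_{ℓ→∞} G_ℓ(u_ℓ,φ_ℓ) < +∞. Then there exists a sequence {z_ℓ} ⊂ ℝ such that the translated sequence {(τ_{z_ℓ} u_ℓ, τ_{z_ℓ} φ_ℓ)} is precompact in X. -/

import Mathlib

/-!
Write `P = s'(u₊)`; since `u₋ + u₊ = 1`, one has `s'(u₋) = -P`. By the Fenchel inequality for `s`,
the integrand of `G_ℓ` is at least `s(φ') + V(φ)`, where `V(φ) = φ - 2 log (1 + e^φ) - const` is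
nonnegative on `[-P, P]`, vanishes exactly at `±P`, and dominates `2 κ t (1 - t)` with
`t = (φ + P) / (2P)` (`potential_lower`).

The only negative contribution is `s(φ')`. Convexity gives `s(p) ≥ p a - e^a` for every slope `a`;
with `a = log (κ t (1 - t))` the term `e^a` is absorbed by half of `V`, and `φ' a` is, up to sign,
the derivative of an increasing bounded function of `φ`, because `log` is integrable at `0`
(`Qf`, `pointwise_bound`). Integrating, `∫ κ t (1 - t)` is bounded by the energy plus a constant
independent of `ℓ` (`energy_bound`).

Translate so that `φ_ℓ` vanishes at the origin. By monotonicity the integral bound becomes a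
uniform decay `C / |y|` of the distance of `φ_ℓ` to its limits (`tail_bound`), so the
Arzelà–Ascoli theorem yields convergence uniform on the whole line, with a limit still in `C`
(`profile_subseq`). For the densities no estimate is needed: `L^∞(ℝ;[0,1])` is weak* sequentially
compact. This is deduced from weak compactness in `L²` after multiplication by the weight
`(1 + x²)⁻¹`, together with density of `C_c` in `L¹` (`density_subseq`).
-/


open MeasureTheory Real Filter Topology Set
open scoped Classical

noncomputable section

/-- Bernoulli entropy `s(p) = p log p + (1-p) log (1-p)` (with `0 log 0 = 0`). -/
def S (p : ℝ) : ℝ := p * Real.log p + (1 - p) * Real.log (1 - p)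

/-- The integrand `g(u,φ,p) = s(u) + s(p) + (1-u)φ - log(1+e^φ)`. -/
def gg (u φ p : ℝ) : ℝ := S u + S p + (1 - u) * φ - Real.log (1 + Real.exp φ)

/-- The chemical potential `s'(v) = log (v/(1-v))`. -/
def phiOf (v : ℝ) : ℝ := Real.log (v / (1 - v))

/-- The step function `θ_{a₋,a₊}`. -/
def theta (am ap x : ℝ) : ℝ := if x < 0 then am else ap

/-- Translation by `z`: `(τ_z f)(x) = f(x-z)`. -/
def tau (z : ℝ) (f : ℝ → ℝ) : ℝ → ℝ := fun x => f (x - z)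

/-- Membership in `L^∞(ℝ;[0,1])`. -/
def MemU (u : ℝ → ℝ) : Prop := Measurable u ∧ ∀ x, u x ∈ Icc (0:ℝ) 1

/-- Membership in `L^∞(ℝ₊;[0,1])`. -/
def MemUplus (u : ℝ → ℝ) : Prop := Measurable u ∧ ∀ x, 0 ≤ x → u x ∈ Icc (0:ℝ) 1

/-- The class `C`: absolutely continuous with `0 ≤ φ' ≤ 1` a.e. (equivalently nondecreasing
and 1-Lipschitz) with limits `pm` at `-∞` and `pp` at `+∞`. -/
def MemC (pm pp : ℝ) (φ : ℝ → ℝ) : Prop :=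
  (∀ x y : ℝ, x ≤ y → φ x ≤ φ y ∧ φ y - φ x ≤ y - x) ∧
  Tendsto φ atBot (𝓝 pm) ∧ Tendsto φ atTop (𝓝 pp)

/-- The class `C⁺` on the half line. -/
def MemCplus (pm pp : ℝ) (φ : ℝ → ℝ) : Prop :=
  (∀ x y : ℝ, 0 ≤ x → x ≤ y → φ x ≤ φ y ∧ φ y - φ x ≤ y - x) ∧
  φ 0 = pm ∧ Tendsto φ atTop (𝓝 pp)

/-- Membership in `X = L^∞(ℝ;[0,1]) × C`. -/
def MemX (um up : ℝ) (u φ : ℝ → ℝ) : Prop := MemU u ∧ MemC (phiOf um) (phiOf up) φ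

/-- Membership in `X⁺ = L^∞(ℝ₊;[0,1]) × C⁺`. -/
def MemXplus (um up : ℝ) (u φ : ℝ → ℝ) : Prop :=
  MemUplus u ∧ MemCplus (phiOf um) (phiOf up) φ

/-- The finite volume functional `G_ℓ` on the symmetric interval `(-ℓ,ℓ)`. -/
def Gl (um up l : ℝ) (u φ : ℝ → ℝ) : EReal :=
  if (∀ x ≤ -l, u x = um ∧ φ x = phiOf um) ∧ (∀ x, l ≤ x → u x = up ∧ φ x = phiOf up) then
    (↑(∫ x in Ioo (-l) l, (gg (u x) (φ x) (deriv φ x) - gg up (phiOf up) 0)) : EReal)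
  else ⊤

/-- The finite volume functional `G_ℓ⁺` on `(0,ℓ)`. -/
def Glplus (um up l : ℝ) (u φ : ℝ → ℝ) : EReal :=
  if (∀ x, l ≤ x → u x = up ∧ φ x = phiOf up) then
    (↑(∫ x in Ioo (0:ℝ) l, (gg (u x) (φ x) (deriv φ x) - gg up (phiOf up) 0)) : EReal)
  else ⊤

/-- The infinite volume functional `G` on the whole line, `+∞` off its domain `D`. -/
def GE (um up : ℝ) (u φ : ℝ → ℝ) : EReal :=
  if Integrable (fun x => (u x - theta um up x)^2) volume ∧
      Integrable (fun x => φ x - theta (phiOf um) (phiOf up) x) volume then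
    (↑(∫ x, (gg (u x) (φ x) (deriv φ x) - gg up (phiOf up) 0)) : EReal)
  else ⊤

/-- The infinite volume functional `G⁺` on the half line, `+∞` off its domain `D⁺`. -/
def GEplus (um up : ℝ) (u φ : ℝ → ℝ) : EReal :=
  if IntegrableOn (fun x => (u x - up)^2) (Ioi 0) volume ∧
      IntegrableOn (fun x => φ x - phiOf up) (Ioi 0) volume then
    (↑(∫ x in Ioi (0:ℝ), (gg (u x) (φ x) (deriv φ x) - gg up (phiOf up) 0)) : EReal)
  else ⊤

/-- Convergence of sequences in `X`: weak* in `L^∞(ℝ;[0,1])` and uniform for `φ`. -/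
def ConvX (un φn : ℕ → ℝ → ℝ) (u φ : ℝ → ℝ) : Prop :=
  (∀ f : ℝ → ℝ, Integrable f volume →
    Tendsto (fun n => ∫ x, un n x * f x) atTop (𝓝 (∫ x, u x * f x))) ∧
  TendstoUniformly φn φ atTop

/-- Convergence of families indexed by `ℓ → ∞` in `X`. -/
def ConvXFam (U Φ : ℝ → ℝ → ℝ) (u φ : ℝ → ℝ) : Prop :=
  (∀ f : ℝ → ℝ, Integrable f volume →
    Tendsto (fun l => ∫ x, U l x * f x) atTop (𝓝 (∫ x, u x * f x))) ∧
  TendstoUniformly Φ φ atTop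

/-- Convergence of sequences in `X⁺`. -/
def ConvXplus (un φn : ℕ → ℝ → ℝ) (u φ : ℝ → ℝ) : Prop :=
  (∀ f : ℝ → ℝ, IntegrableOn f (Ioi 0) volume →
    Tendsto (fun n => ∫ x in Ioi (0:ℝ), un n x * f x) atTop
      (𝓝 (∫ x in Ioi (0:ℝ), u x * f x))) ∧
  TendstoUniformlyOn φn φ atTop (Ici 0)

/-- Convergence of families indexed by `ℓ → ∞` in `X⁺`. -/
def ConvXplusFam (U Φ : ℝ → ℝ → ℝ) (u φ : ℝ → ℝ) : Prop :=
  (∀ f : ℝ → ℝ, IntegrableOn f (Ioi 0) volume →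
    Tendsto (fun l => ∫ x in Ioi (0:ℝ), U l x * f x) atTop
      (𝓝 (∫ x in Ioi (0:ℝ), u x * f x))) ∧
  TendstoUniformlyOn Φ φ atTop (Ici 0)

/-- The standing wave `ū(x) = 1/2 + (u₊ - 1/2) tanh((u₊ - 1/2) x)`. -/
def ubarStanding (up : ℝ) (x : ℝ) : ℝ :=
  1/2 + (up - 1/2) * Real.tanh ((up - 1/2) * x)


/-! ### Pointwise bounds on the integrand -/

lemma gibbs_aux {p q : ℝ} (hp : 0 ≤ p) (hq : 0 < q) :
    p * Real.log q - p * Real.log p ≤ q - p := by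
  rcases hp.eq_or_lt with rfl | hp
  · simp [hq.le]
  · have h := Real.log_le_sub_one_of_pos (div_pos hq hp)
    rw [Real.log_div hq.ne' hp.ne'] at h
    have h2 := mul_le_mul_of_nonneg_left h hp.le
    have h3 : p * (q / p - 1) = q - p := by field_simp
    linarith

/-- A tangent-type lower bound for the convex function `s`; the slope `a` is free. -/
lemma S_ge_tangent {p : ℝ} (hp : p ∈ Icc (0:ℝ) 1) (a : ℝ) : p * a - Real.exp a ≤ S p := by
  have h1 := gibbs_aux hp.1 (Real.exp_pos a)
  have h2 := gibbs_aux (sub_nonneg.2 hp.2) one_pos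
  rw [Real.log_exp] at h1
  simp only [Real.log_one] at h2
  unfold S
  linarith

/-- The Fenchel inequality between `s` and its conjugate `φ ↦ log (1 + e^φ)`. -/
lemma S_ge_fenchel {u : ℝ} (hu : u ∈ Icc (0:ℝ) 1) (φ : ℝ) :
    u * φ - Real.log (1 + Real.exp φ) ≤ S u := by
  have hE := Real.exp_pos φ
  have h1 := gibbs_aux (q := Real.exp φ / (1 + Real.exp φ)) hu.1 (by positivity)
  have h2 := gibbs_aux (q := 1 / (1 + Real.exp φ)) (sub_nonneg.2 hu.2) (by positivity)
  rw [Real.log_div hE.ne' (by positivity), Real.log_exp] at h1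
  rw [Real.log_div one_ne_zero (by positivity), Real.log_one] at h2
  have h3 : Real.exp φ / (1 + Real.exp φ) + 1 / (1 + Real.exp φ) = 1 := by
    field_simp
    ring
  unfold S
  linarith

lemma S_zero : S 0 = 0 := by simp [S]

/-- Equality holds in the Fenchel inequality at `φ = s'(v)`. -/
lemma gg_phiOf {v : ℝ} (h0 : 0 < v) (h1 : v < 1) :
    gg v (phiOf v) 0 = phiOf v - 2 * Real.log (1 + Real.exp (phiOf v)) := by
  have h1' : 0 < 1 - v := by linarith
  have e : Real.exp (phiOf v) = v / (1 - v) := Real.exp_log (div_pos h0 h1')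
  have e2 : 1 + v / (1 - v) = 1 / (1 - v) := by field_simp; ring
  have e3 : phiOf v = Real.log v - Real.log (1 - v) := Real.log_div h0.ne' h1'.ne'
  rw [gg, e, e2, Real.log_div one_ne_zero h1'.ne', Real.log_one, S_zero, e3, S]
  ring

lemma half_sq_diff_le_cosh {x P : ℝ} (h : |x| ≤ P) :
    (P ^ 2 - x ^ 2) / 2 ≤ Real.cosh P - Real.cosh x := by
  have hmono : MonotoneOn (fun y : ℝ => Real.cosh y - y ^ 2 / 2) (Ici 0) := by
    apply monotoneOn_of_deriv_nonneg (convex_Ici 0) (by fun_prop) (by fun_prop)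
    intro y hy
    rw [interior_Ici] at hy
    have hd : HasDerivAt (fun y : ℝ => Real.cosh y - y ^ 2 / 2)
        (Real.sinh y - 2 * y / 2) y := by
      convert! (Real.hasDerivAt_cosh y).sub ((hasDerivAt_pow 2 y).div_const 2) using 2
      norm_num
    rw [hd.deriv]
    have := Real.self_le_sinh_iff.2 (le_of_lt hy)
    linarith
  have := hmono (mem_Ici.2 (abs_nonneg x)) (mem_Ici.2 ((abs_nonneg x).trans h)) h
  simp only [Real.cosh_abs, sq_abs] at this
  linarith

/-- The symmetric double-well potential `φ - 2 log (1 + e^φ)`, minus its value at the wells `±P`,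
dominates a multiple of `P² - φ²`. -/
lemma potential_lower {x P : ℝ} (h : |x| ≤ P) :
    (P ^ 2 - x ^ 2) / (2 * (1 + Real.cosh P)) ≤
      (x - 2 * Real.log (1 + Real.exp x)) - (P - 2 * Real.log (1 + Real.exp P)) := by
  have key : ∀ y : ℝ, y - 2 * Real.log (1 + Real.exp y) = - Real.log (2 * (1 + Real.cosh y)) := by
    intro y
    have e : (1 + Real.exp y) ^ 2 = Real.exp y * (2 * (1 + Real.cosh y)) := by
      rw [Real.cosh_eq]
      have : Real.exp y * Real.exp (-y) = 1 := by rw [← Real.exp_add]; simp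
      linear_combination (-1) * this
    have hc := Real.cosh_pos y
    have := congrArg Real.log e
    rw [Real.log_pow, Real.log_mul (Real.exp_pos y).ne' (by positivity), Real.log_exp] at this
    push_cast at this
    linarith
  rw [key, key]
  have hx := Real.cosh_pos x
  have hP := Real.cosh_pos P
  have h1 := Real.log_le_sub_one_of_pos
    (show 0 < (2 * (1 + Real.cosh x)) / (2 * (1 + Real.cosh P)) by positivity)
  rw [Real.log_div (by positivity) (by positivity)] at h1
  have h2 := half_sq_diff_le_cosh h
  have h3 : (P ^ 2 - x ^ 2) / (2 * (1 + Real.cosh P)) ≤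
      1 - (2 * (1 + Real.cosh x)) / (2 * (1 + Real.cosh P)) := by
    rw [le_sub_iff_add_le, ← add_div, div_le_one (by positivity)]
    linarith
  linarith

/-! ### The energy controls the potential -/

/-- An increasing primitive on `[0,1]` of `t ↦ -log (κ t (1 - t))`. It is bounded, which is what
makes the negative entropy term `s(φ')` harmless. -/
def Qf (κ t : ℝ) : ℝ := (2 - Real.log κ) * t + negMulLog t - negMulLog (1 - t)

lemma Qf_hasDerivAt {κ t : ℝ} (hκ : 0 < κ) (h0 : 0 < t) (h1 : t < 1) :
    HasDerivAt (Qf κ) (- Real.log (κ * (t * (1 - t)))) t := by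
  have h1' : 0 < 1 - t := by linarith
  have a1 := (hasDerivAt_id t).const_mul (2 - Real.log κ)
  have a2 := Real.hasDerivAt_negMulLog h0.ne'
  have a3 := (Real.hasDerivAt_negMulLog h1'.ne').comp t ((hasDerivAt_id t).const_sub 1)
  convert! (a1.add a2).sub a3 using 1
  rw [Real.log_mul hκ.ne' (by positivity), Real.log_mul h0.ne' h1'.ne']
  ring

lemma Qf_monotoneOn {κ : ℝ} (hκ : 0 < κ) (hκ1 : κ ≤ 1) : MonotoneOn (Qf κ) (Icc 0 1) := by
  apply monotoneOn_of_deriv_nonneg (convex_Icc 0 1)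
  · unfold Qf; fun_prop
  · rw [interior_Icc]
    intro t ht
    exact (Qf_hasDerivAt hκ ht.1 ht.2).differentiableAt.differentiableWithinAt
  · rw [interior_Icc]
    intro t ht
    rw [(Qf_hasDerivAt hκ ht.1 ht.2).deriv, neg_nonneg]
    have h1' : 0 < 1 - t := by linarith [ht.2]
    apply Real.log_nonpos (by have := ht.1; positivity)
    have := ht.1
    have : t * (1 - t) ≤ 1 := by nlinarith
    nlinarith [mul_pos ht.1 h1']

/-- The constant `κ`: small enough that the potential dominates `2 κ t (1 - t)`, with `t` the
rescaled value of `φ`, and at most `1` so that `Qf κ` is increasing on `[0,1]`. -/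
def kap (P : ℝ) : ℝ := min 1 (P ^ 2 / (1 + Real.cosh P))

lemma kap_pos {P : ℝ} (hP : 0 < P) : 0 < kap P := by
  have := Real.cosh_pos P
  exact lt_min one_pos (by positivity)

/-- Affine rescaling of `[-P, P]` to `[0, 1]`. -/
def rs (P y : ℝ) : ℝ := (y + P) / (2 * P)

/-- The basic inequality at a point of differentiability: the free slope in `S_ge_tangent` is chosen
as `log (κ t (1 - t))`, with `t` the rescaled value of `φ`, so that the error term `e^a` is absorbed
by half of the potential and the term `p * a` is an exact derivative. -/
lemma pointwise_bound {P : ℝ} (hP : 0 < P) {φ : ℝ → ℝ} (hmono : Monotone φ)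
    (hrange : ∀ x, φ x ∈ Icc (-P) P) {x u : ℝ} (hd : DifferentiableAt ℝ φ x)
    (hp : deriv φ x ∈ Icc (0:ℝ) 1) (hu : u ∈ Icc (0:ℝ) 1) :
    kap P * (rs P (φ x) * (1 - rs P (φ x)))
      - 2 * P * deriv (fun y => Qf (kap P) (rs P (φ y))) x ≤
    gg u (φ x) (deriv φ x) - (P - 2 * Real.log (1 + Real.exp P)) := by
  have hκ := kap_pos hP
  have hκ1 : kap P ≤ 1 := min_le_left _ _
  have ht : ∀ y, rs P (φ y) ∈ Icc (0:ℝ) 1 := by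
    intro y
    have := hrange y
    constructor
    · exact div_nonneg (by linarith [this.1]) (by linarith)
    · rw [rs, div_le_one (by linarith)]; linarith [this.2]
  have hV := potential_lower (abs_le.2 (hrange x))
  have hu' := S_ge_fenchel hu (φ x)
  have hκW : 2 * (kap P * (rs P (φ x) * (1 - rs P (φ x)))) ≤
      (P ^ 2 - φ x ^ 2) / (2 * (1 + Real.cosh P)) := by
    have e : (P ^ 2 - φ x ^ 2) / (2 * (1 + Real.cosh P)) =
        2 * (P ^ 2 / (1 + Real.cosh P) * (rs P (φ x) * (1 - rs P (φ x)))) := by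
      have := Real.cosh_pos P
      unfold rs
      field_simp
      ring
    rw [e]
    have := mul_nonneg (ht x).1 (sub_nonneg.2 (ht x).2)
    gcongr
    exact min_le_right _ _
  have hmain : gg u (φ x) (deriv φ x) - (P - 2 * Real.log (1 + Real.exp P)) ≥
      S (deriv φ x) + 2 * (kap P * (rs P (φ x) * (1 - rs P (φ x)))) := by
    unfold gg
    linarith
  have hmonoQ : Monotone (fun y => Qf (kap P) (rs P (φ y))) := by
    intro y z hyz
    apply Qf_monotoneOn hκ hκ1 (ht y) (ht z)
    unfold rs
    have := hmono hyz
    gcongr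
  have hQ0 : 0 ≤ deriv (fun y => Qf (kap P) (rs P (φ y))) x := hmonoQ.deriv_nonneg
  by_cases hin : 0 < rs P (φ x) ∧ rs P (φ x) < 1
  · have hpos : 0 < kap P * (rs P (φ x) * (1 - rs P (φ x))) :=
      mul_pos hκ (mul_pos hin.1 (sub_pos.2 hin.2))
    have hS := S_ge_tangent hp (Real.log (kap P * (rs P (φ x) * (1 - rs P (φ x)))))
    rw [Real.exp_log hpos] at hS
    have hr : HasDerivAt (fun y => rs P (φ y)) (deriv φ x / (2 * P)) x :=
      (hd.hasDerivAt.add_const P).div_const (2 * P)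
    have hc := (Qf_hasDerivAt hκ hin.1 hin.2).comp x hr
    rw [show (Qf (kap P) ∘ fun y => rs P (φ y)) = fun y => Qf (kap P) (rs P (φ y)) from rfl] at hc
    rw [hc.deriv]
    have : 2 * P * (-Real.log (kap P * (rs P (φ x) * (1 - rs P (φ x)))) * (deriv φ x / (2 * P)))
        = - (deriv φ x * Real.log (kap P * (rs P (φ x) * (1 - rs P (φ x))))) := by
      field_simp
    rw [this]
    linarith
  · -- Here `φ x = ±P` is an extremal value of `φ`, so `φ'` vanishes.
    have hW : rs P (φ x) * (1 - rs P (φ x)) = 0 := by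
      rcases not_and_or.1 hin with h | h
      · rw [le_antisymm (not_lt.1 h) (ht x).1]; simp
      · rw [le_antisymm (ht x).2 (not_lt.1 h)]; simp
    have hp0 : deriv φ x = 0 := by
      rcases not_and_or.1 hin with h | h
      · have h0 : rs P (φ x) = 0 := le_antisymm (not_lt.1 h) (ht x).1
        have : φ x = -P := by
          unfold rs at h0
          field_simp at h0
          linarith
        exact IsLocalMin.deriv_eq_zero (Eventually.of_forall fun y => this ▸ (hrange y).1)
      · have h0 : rs P (φ x) = 1 := le_antisymm (ht x).2 (not_lt.1 h)
        have : φ x = P := by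
          unfold rs at h0
          field_simp at h0
          linarith
        exact IsLocalMax.deriv_eq_zero (Eventually.of_forall fun y => this ▸ (hrange y).2)
    rw [hp0, S_zero, hW] at hmain
    rw [hp0, hW]
    have : 0 ≤ 2 * P * deriv (fun y => Qf (kap P) (rs P (φ y))) x := by positivity
    linarith

lemma deriv_mem_Icc {φ : ℝ → ℝ} (hlip : ∀ x y : ℝ, x ≤ y → φ x ≤ φ y ∧ φ y - φ x ≤ y - x)
    (x : ℝ) : deriv φ x ∈ Icc (0:ℝ) 1 := by
  have hmono : Monotone φ := fun x y h => (hlip x y h).1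
  refine ⟨hmono.deriv_nonneg, ?_⟩
  by_cases hd : DifferentiableAt ℝ φ x
  · have h2 : Monotone (fun y => y - φ y) := fun a b h => by
      have := (hlip a b h).2
      simp only
      linarith
    have h3 : 0 ≤ deriv (fun y => y - φ y) x := h2.deriv_nonneg
    have h4 := ((hasDerivAt_id x).sub hd.hasDerivAt).deriv
    have h5 : deriv (fun y => y - φ y) x = 1 - deriv φ x := h4
    linarith
  · rw [deriv_zero_of_not_differentiableAt hd]; exact zero_le_one

lemma lip_continuous {φ : ℝ → ℝ} (hlip : ∀ x y : ℝ, x ≤ y → φ x ≤ φ y ∧ φ y - φ x ≤ y - x) :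
    LipschitzWith 1 φ := by
  apply LipschitzWith.of_dist_le_mul
  intro x y
  rw [NNReal.coe_one, one_mul, Real.dist_eq, Real.dist_eq]
  rcases le_total x y with h | h
  · have := hlip x y h
    rw [abs_sub_comm, abs_of_nonneg (by linarith), abs_sub_comm x, abs_of_nonneg (by linarith)]
    exact this.2
  · have := hlip y x h
    rw [abs_of_nonneg (by linarith), abs_of_nonneg (by linarith)]
    exact this.2

lemma S_eq_negMulLog (p : ℝ) : S p = - negMulLog p - negMulLog (1 - p) := by
  simp [S, negMulLog]; ring

lemma continuous_S : Continuous S := by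
  have : S = fun p => - negMulLog p - negMulLog (1 - p) := funext S_eq_negMulLog
  rw [this]; fun_prop

lemma gg_integrableOn {l : ℝ} {u φ : ℝ → ℝ} (hu : MemU u)
    (hlip : ∀ x y : ℝ, x ≤ y → φ x ≤ φ y ∧ φ y - φ x ≤ y - x) (c : ℝ) :
    IntegrableOn (fun x => gg (u x) (φ x) (deriv φ x) - c) (Ioo (-l) l) := by
  have hc := (lip_continuous hlip).continuous
  have hK : IsCompact ((Icc (0:ℝ) 1 ×ˢ (φ '' Icc (-l) l)) ×ˢ Icc (0:ℝ) 1) :=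
    (isCompact_Icc.prod (isCompact_Icc.image hc)).prod isCompact_Icc
  have hG : Continuous (fun q : (ℝ × ℝ) × ℝ => gg q.1.1 q.1.2 q.2 - c) := by
    unfold gg
    have h1 := continuous_S.comp (continuous_fst.comp (continuous_fst (X := ℝ × ℝ) (Y := ℝ)))
    have h2 := continuous_S.comp (continuous_snd (X := ℝ × ℝ) (Y := ℝ))
    have h3 : Continuous (fun q : (ℝ × ℝ) × ℝ => Real.log (1 + Real.exp q.1.2)) :=
      Continuous.log (by fun_prop) (fun q => by have := Real.exp_pos q.1.2; positivity)
    have h4 : Continuous (fun q : (ℝ × ℝ) × ℝ => (1 - q.1.1) * q.1.2) := by fun_prop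
    exact (((h1.add h2).add h4).sub h3).sub continuous_const
  obtain ⟨C, hC⟩ := hK.exists_bound_of_continuousOn hG.continuousOn
  have hmeas : Measurable (fun x => gg (u x) (φ x) (deriv φ x) - c) :=
    hG.measurable.comp ((hu.1.prodMk hc.measurable).prodMk (measurable_deriv φ))
  refine Measure.integrableOn_of_bounded (M := C) (by simp) hmeas.aestronglyMeasurable ?_
  rw [ae_restrict_iff' measurableSet_Ioo]
  refine Eventually.of_forall fun x hx => hC ((u x, φ x), deriv φ x) ?_
  exact ⟨⟨hu.2 x, mem_image_of_mem _ (Ioo_subset_Icc_self hx)⟩, deriv_mem_Icc hlip x⟩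

/-- Bound of the integrated potential by the energy, uniformly in `l`. The last term comes from
the total variation of the increasing function `Qf ∘ rs ∘ φ`. -/
lemma energy_bound {P l : ℝ} (hP : 0 < P) {u φ : ℝ → ℝ} (hu : MemU u)
    (hlip : ∀ x y : ℝ, x ≤ y → φ x ≤ φ y ∧ φ y - φ x ≤ y - x)
    (hrange : ∀ x, φ x ∈ Icc (-P) P) (hll : -l ≤ l) (hl : φ (-l) = -P) (hr : φ l = P) :
    ∫ x in Ioo (-l) l, kap P * (rs P (φ x) * (1 - rs P (φ x))) ≤
      (∫ x in Ioo (-l) l, (gg (u x) (φ x) (deriv φ x) - (P - 2 * Real.log (1 + Real.exp P))))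
        + 2 * P * (2 - Real.log (kap P)) := by
  have hκ := kap_pos hP
  have hκ1 : kap P ≤ 1 := min_le_left _ _
  have hmono : Monotone φ := fun x y h => (hlip x y h).1
  have hc := (lip_continuous hlip).continuous
  have ht : ∀ y, rs P (φ y) ∈ Icc (0:ℝ) 1 := by
    intro y
    have := hrange y
    constructor
    · exact div_nonneg (by linarith [this.1]) (by linarith)
    · rw [rs, div_le_one (by linarith)]; linarith [this.2]
  have hmonoQ : Monotone (fun y => Qf (kap P) (rs P (φ y))) := by
    intro y z hyz
    apply Qf_monotoneOn hκ hκ1 (ht y) (ht z)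
    unfold rs
    have := hmono hyz
    gcongr
  have hQint := (hmonoQ.monotoneOn (uIcc (-l) l)).intervalIntegrable_deriv
  have hQle := (hmonoQ.monotoneOn (uIcc (-l) l)).intervalIntegral_deriv_mem_uIcc
  rw [uIcc_of_le (sub_nonneg.2 (hmonoQ hll))] at hQle
  have hQle := hQle.2
  rw [intervalIntegral.integral_of_le hll, integral_Ioc_eq_integral_Ioo] at hQle
  rw [intervalIntegrable_iff_integrableOn_Ioo_of_le hll] at hQint
  have hval : Qf (kap P) (rs P (φ l)) - Qf (kap P) (rs P (φ (-l))) = 2 - Real.log (kap P) := by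
    rw [hl, hr]
    have e1 : rs P P = 1 := by unfold rs; field_simp; ring
    have e2 : rs P (-P) = 0 := by simp [rs]
    rw [e1, e2]
    simp [Qf]
  rw [hval] at hQle
  have hWint : IntegrableOn (fun x => kap P * (rs P (φ x) * (1 - rs P (φ x)))) (Ioo (-l) l) := by
    have : Continuous (fun x => kap P * (rs P (φ x) * (1 - rs P (φ x)))) := by
      unfold rs; fun_prop
    exact (this.integrableOn_Icc).mono_set Ioo_subset_Icc_self
  have hmain := integral_mono_ae (μ := volume.restrict (Ioo (-l) l))
    (hWint.sub (hQint.const_mul (2 * P)))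
    (gg_integrableOn hu hlip (P - 2 * Real.log (1 + Real.exp P))) ?_
  · simp only [Pi.sub_apply] at hmain
    rw [integral_sub hWint (hQint.const_mul (2 * P)), integral_const_mul (2 * P)] at hmain
    have := mul_le_mul_of_nonneg_left hQle (show 0 ≤ 2 * P by linarith)
    linarith
  · have hdiff : ∀ᵐ x, DifferentiableAt ℝ φ x := hmono.ae_differentiableAt
    filter_upwards [ae_restrict_of_ae hdiff] with x hx
    exact pointwise_bound hP hmono hrange hx (deriv_mem_Icc hlip x) (hu.2 x)

/-- The tails of an increasing profile centred at `w` decay like `C / |y|`, since the potential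
is at least linear in the distance to the nearest well. -/
lemma tail_bound {P l K w : ℝ} (hP : 0 < P) {φ : ℝ → ℝ} (hc : Continuous φ)
    (hmono : Monotone φ)
    (hrange : ∀ x, φ x ∈ Icc (-P) P)
    (hl : ∀ x ≤ -l, φ x = -P) (hr : ∀ x, l ≤ x → φ x = P) (hw : φ w = 0)
    (hK : ∫ x in Ioo (-l) l, kap P * (rs P (φ x) * (1 - rs P (φ x))) ≤ K) {y : ℝ} (hy : 0 < y) :
    P - φ (w + y) ≤ 4 * P * K / kap P / y ∧ φ (w - y) + P ≤ 4 * P * K / kap P / y := by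
  have hκ := kap_pos hP
  have hwl : -l < w := by
    by_contra! h
    have := hl w h
    linarith
  have hwr : w < l := by
    by_contra! h
    have := hr w h
    linarith
  have hnn : ∀ x, 0 ≤ kap P * (rs P (φ x) * (1 - rs P (φ x))) := by
    intro x
    have := hrange x
    have h1 : 0 ≤ rs P (φ x) := div_nonneg (by linarith [this.1]) (by linarith)
    have h2 : rs P (φ x) ≤ 1 := by rw [rs, div_le_one (by linarith)]; linarith [this.2]
    exact mul_nonneg hκ.le (mul_nonneg h1 (sub_nonneg.2 h2))
  have hWint : IntegrableOn (fun x => kap P * (rs P (φ x) * (1 - rs P (φ x)))) (Ioo (-l) l) := by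
    have : Continuous (fun x => kap P * (rs P (φ x) * (1 - rs P (φ x)))) := by
      unfold rs; fun_prop
    exact (this.integrableOn_Icc).mono_set Ioo_subset_Icc_self
  have hK0 : 0 ≤ K := (integral_nonneg hnn).trans hK
  -- A lower bound `m` of the integrand on a subinterval of length `y` gives `m * y ≤ K`.
  have hsub : ∀ a m : ℝ, Ioo a (a + y) ⊆ Ioo (-l) l →
      (∀ x ∈ Ioo a (a + y), m ≤ kap P * (rs P (φ x) * (1 - rs P (φ x)))) → m * y ≤ K := by
    intro a m hs hm
    have h1 : ∫ x in Ioo a (a + y), m ≤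
        ∫ x in Ioo a (a + y), kap P * (rs P (φ x) * (1 - rs P (φ x))) :=
      setIntegral_mono_on (integrableOn_const (by simp)) (hWint.mono_set hs) measurableSet_Ioo hm
    have h2 := setIntegral_mono_set hWint (ae_restrict_of_ae (Eventually.of_forall hnn))
      (LE.le.eventuallyLE hs)
    have h3 : ∫ x in Ioo a (a + y), m = m * y := by
      simp [hy.le, mul_comm]
    linarith
  have hfin : ∀ d : ℝ, kap P * (d / (4 * P)) * y ≤ K → d ≤ 4 * P * K / kap P / y := by
    intro d hd
    rw [le_div_iff₀ hy, le_div_iff₀ hκ]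
    have e : kap P * (d / (4 * P)) * y * (4 * P) = d * y * kap P := by field_simp
    have := mul_le_mul_of_nonneg_right hd (show 0 ≤ 4 * P by linarith)
    linarith
  have hrs : ∀ z, rs P z * (1 - rs P z) = (P + z) * (P - z) / (4 * P ^ 2) := by
    intro z; unfold rs; field_simp; ring
  have hB : 0 ≤ 4 * P * K / kap P / y := by positivity
  constructor
  · by_cases h : l ≤ w + y
    · rw [hr _ h]; simpa using hB
    · push Not at h
      apply hfin
      apply hsub w _ (Ioo_subset_Ioo hwl.le h.le)
      intro x hx
      have h1 : 0 ≤ φ x := hw ▸ hmono hx.1.le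
      have h2 : φ x ≤ φ (w + y) := hmono hx.2.le
      have h3 := (hrange (w + y)).2
      rw [hrs]
      refine mul_le_mul_of_nonneg_left ?_ hκ.le
      rw [div_le_div_iff₀ (by positivity) (by positivity)]
      have : P * (P - φ (w + y)) ≤ (P + φ x) * (P - φ x) := by
        apply mul_le_mul <;> linarith
      nlinarith [mul_le_mul_of_nonneg_right this (show 0 ≤ 4 * P by linarith)]
  · by_cases h : w - y ≤ -l
    · rw [hl _ h]; simpa using hB
    · push Not at h
      apply hfin
      apply hsub (w - y) _ (Ioo_subset_Ioo h.le (by linarith))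
      intro x hx
      have h1 : φ x ≤ 0 := hw ▸ hmono (by linarith [hx.2])
      have h2 : φ (w - y) ≤ φ x := hmono hx.1.le
      have h3 := (hrange (w - y)).1
      rw [hrs]
      refine mul_le_mul_of_nonneg_left ?_ hκ.le
      rw [div_le_div_iff₀ (by positivity) (by positivity)]
      have : (φ (w - y) + P) * P ≤ (P + φ x) * (P - φ x) := by
        apply mul_le_mul <;> linarith
      nlinarith [mul_le_mul_of_nonneg_right this (show 0 ≤ 4 * P by linarith)]

/-! ### Compactness of the profiles -/

/-- Nondecreasing `1`-Lipschitz functions with values in `[-P, P]`. -/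
def profiles (P : ℝ) : Set C(ℝ, ℝ) :=
  {f | (∀ x y : ℝ, x ≤ y → f x ≤ f y ∧ f y - f x ≤ y - x) ∧ ∀ x, f x ∈ Icc (-P) P}

/-- Arzelà–Ascoli in the compact-open topology. -/
lemma profiles_isCompact (P : ℝ) : IsCompact (profiles P) := by
  apply ArzelaAscoli.isCompact_of_equicontinuous
  · have himg : ContinuousMap.toFun '' profiles P =
        {f : ℝ → ℝ | (∀ x y : ℝ, x ≤ y → f x ≤ f y ∧ f y - f x ≤ y - x) ∧
          ∀ x, f x ∈ Icc (-P) P} := by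
      ext f
      constructor
      · rintro ⟨g, hg, rfl⟩
        exact hg
      · intro hf
        exact ⟨⟨f, (lip_continuous hf.1).continuous⟩, hf, rfl⟩
    rw [himg]
    refine IsCompact.of_isClosed_subset
      (isCompact_univ_pi (s := fun _ : ℝ => Icc (-P) P) fun _ => isCompact_Icc) ?_ ?_
    · rw [Set.ofPred_and]
      refine IsClosed.inter ?_ ?_
      · simp only [Set.ofPred_forall]
        refine isClosed_iInter fun x => isClosed_iInter fun y => isClosed_iInter fun _ => ?_
        exact (isClosed_le (continuous_apply x) (continuous_apply y)).inter
          (isClosed_le ((continuous_apply y).sub (continuous_apply x)) continuous_const)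
      · simp only [Set.ofPred_forall]
        exact isClosed_iInter fun x => isClosed_Icc.preimage (continuous_apply x)
    · intro f hf x _
      exact hf.2 x
  · refine (LipschitzWith.uniformEquicontinuous _ 1 ?_).equicontinuous
    intro f
    exact lip_continuous f.2.1

/-- A sequence of profiles with uniformly decaying tails has a uniformly convergent subsequence. -/
lemma profile_subseq {P C : ℝ} (f : ℕ → ℝ → ℝ)
    (hlip : ∀ n, ∀ x y : ℝ, x ≤ y → f n x ≤ f n y ∧ f n y - f n x ≤ y - x)
    (hrange : ∀ n x, f n x ∈ Icc (-P) P)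
    (htail : ∀ᶠ n in atTop, ∀ y, 0 < y → P - f n y ≤ C / y ∧ f n (-y) + P ≤ C / y) :
    ∃ σ : ℕ → ℕ, StrictMono σ ∧ ∃ φ : ℝ → ℝ, MemC (-P) P φ ∧
      TendstoUniformly (fun n => f (σ n)) φ atTop := by
  obtain ⟨g, hg, σ, hσ, hlim⟩ := (profiles_isCompact P).isSeqCompact
    (x := fun n => (⟨f n, (lip_continuous (hlip n)).continuous⟩ : C(ℝ, ℝ)))
    (fun n => ⟨hlip n, hrange n⟩)
  have hloc := ContinuousMap.tendsto_iff_forall_isCompact_tendstoUniformlyOn.1 hlim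
  have hpt : ∀ x, Tendsto (fun n => f (σ n) x) atTop (𝓝 (g x)) := by
    intro x
    exact (hloc {x} isCompact_singleton).tendsto_at (mem_singleton x)
  have htσ := hσ.tendsto_atTop.eventually htail
  have hgtail : ∀ y, 0 < y → P - g y ≤ C / y ∧ g (-y) + P ≤ C / y := by
    intro y hy
    constructor
    · exact le_of_tendsto ((hpt y).const_sub P) (htσ.mono fun n hn => (hn y hy).1)
    · exact le_of_tendsto ((hpt (-y)).add_const P) (htσ.mono fun n hn => (hn y hy).2)
  have hCy : Tendsto (fun y : ℝ => C / y) atTop (𝓝 0) := tendsto_const_nhds.div_atTop tendsto_id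
  refine ⟨σ, hσ, g, ⟨hg.1, ?_, ?_⟩, ?_⟩
  · have h2 : Tendsto (fun y : ℝ => -P + C / (-y)) atBot (𝓝 (-P)) := by
      simpa using (hCy.comp tendsto_neg_atBot_atTop).const_add (-P)
    refine tendsto_of_tendsto_of_tendsto_of_le_of_le' tendsto_const_nhds h2
      (Eventually.of_forall fun x => (hg.2 x).1) ?_
    filter_upwards [eventually_lt_atBot 0] with x hx
    have := (hgtail (-x) (by linarith)).2
    rw [neg_neg] at this
    linarith
  · have h2 : Tendsto (fun y : ℝ => P - C / y) atTop (𝓝 P) := by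
      simpa using hCy.const_sub P
    refine tendsto_of_tendsto_of_tendsto_of_le_of_le' h2 tendsto_const_nhds ?_
      (Eventually.of_forall fun x => (hg.2 x).2)
    filter_upwards [eventually_gt_atTop 0] with x hx
    have := (hgtail x hx).1
    linarith
  · rw [Metric.tendstoUniformly_iff]
    intro ε hε
    obtain ⟨R, hR0, hR⟩ : ∃ R : ℝ, 0 < R ∧ C / R < ε :=
      ((eventually_gt_atTop 0).and (hCy.eventually (gt_mem_nhds hε))).exists
    filter_upwards [htσ, Metric.tendstoUniformlyOn_iff.1 (hloc (Icc (-R) R) isCompact_Icc) ε hε]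
      with n hn hun x
    by_cases hx : x ∈ Icc (-R) R
    · exact hun x hx
    · -- Both functions are within `C / R` of the same well.
      rw [Real.dist_eq, abs_sub_lt_iff]
      have a1 := hrange (σ n) x
      have a2 := hg.2 x
      rcases not_and_or.1 hx with h | h
      · push Not at h
        have b1 := (hn R hR0).2
        have b2 := (hgtail R hR0).2
        have c1 := (hlip (σ n) x (-R) h.le).1
        have c2 := (hg.1 x (-R) h.le).1
        constructor <;> linarith [a1.1, a2.1]
      · push Not at h
        have b1 := (hn R hR0).1
        have b2 := (hgtail R hR0).1
        have c1 := (hlip (σ n) R x h.le).1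
        have c2 := (hg.1 R x h.le).1
        constructor <;> linarith [a1.2, a2.2]

/-! ### Weak* compactness of the densities -/

/-- Bounded sequences in a separable Hilbert space have weakly convergent subsequences. -/
lemma hilbert_weak_subseq {H : Type*} [NormedAddCommGroup H] [InnerProductSpace ℝ H]
    [CompleteSpace H] [TopologicalSpace.SeparableSpace H] (x : ℕ → H) (R : ℝ)
    (hx : ∀ n, ‖x n‖ ≤ R) :
    ∃ σ : ℕ → ℕ, StrictMono σ ∧ ∃ a : H, ∀ y : H,
      Tendsto (fun n => inner ℝ (x (σ n)) y) atTop (𝓝 (inner ℝ a y)) := by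
  obtain ⟨a, _, σ, hσ, hlim⟩ := WeakDual.isSeqCompact_closedBall ℝ H 0 R
    (x := fun n => StrongDual.toWeakDual (InnerProductSpace.toDual ℝ H (x n))) (fun n => by
      simpa using hx n)
  refine ⟨σ, hσ, (InnerProductSpace.toDual ℝ H).symm (WeakDual.toStrongDual a), fun y => ?_⟩
  rw [InnerProductSpace.toDual_symm_apply]
  exact tendsto_iff_forall_eval_tendsto_topDualPairing.1 hlim y

lemma MemU.integrable_mul {u f : ℝ → ℝ} (hu : MemU u) (hf : Integrable f) :
    Integrable (fun x => u x * f x) := by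
  refine hf.norm.mono' (hu.1.aestronglyMeasurable.mul hf.1) (Eventually.of_forall fun x => ?_)
  rw [norm_mul, Real.norm_of_nonneg (hu.2 x).1]
  exact mul_le_of_le_one_left (norm_nonneg _) (hu.2 x).2

lemma MemU.abs_integral_sub_le {u f g : ℝ → ℝ} (hu : MemU u) (hf : Integrable f)
    (hg : Integrable g) :
    |(∫ x, u x * f x) - ∫ x, u x * g x| ≤ ∫ x, ‖f x - g x‖ := by
  rw [← integral_sub (hu.integrable_mul hf) (hu.integrable_mul hg), ← Real.norm_eq_abs]
  refine norm_integral_le_of_norm_le (hf.sub hg).norm (Eventually.of_forall fun x => ?_)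
  rw [← mul_sub, norm_mul, Real.norm_of_nonneg (hu.2 x).1]
  exact mul_le_of_le_one_left (norm_nonneg _) (hu.2 x).2

/-- A square-integrable weight, which turns elements of `L^∞` into elements of `L²`. -/
def rho (x : ℝ) : ℝ := (1 + x ^ 2)⁻¹

lemma rho_pos (x : ℝ) : 0 < rho x := by unfold rho; positivity

lemma continuous_rho : Continuous rho := by
  unfold rho
  exact Continuous.inv₀ (by fun_prop) (fun x => by positivity)

lemma memLp_rho : MemLp rho 2 := by
  rw [memLp_two_iff_integrable_sq continuous_rho.aestronglyMeasurable]
  refine integrable_inv_one_add_sq.mono' (continuous_rho.pow 2).aestronglyMeasurable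
    (Eventually.of_forall fun x => ?_)
  rw [Real.norm_of_nonneg (sq_nonneg _), sq]
  exact mul_le_of_le_one_left (rho_pos x).le (inv_le_one_of_one_le₀ (by nlinarith [sq_nonneg x]))

lemma MemU.memLp_rho_mul {u : ℝ → ℝ} (hu : MemU u) : MemLp (fun x => rho x * u x) 2 := by
  refine memLp_rho.of_le (continuous_rho.measurable.mul hu.1).aestronglyMeasurable
    (Eventually.of_forall fun x => ?_)
  rw [norm_mul, Real.norm_of_nonneg (hu.2 x).1]
  exact mul_le_of_le_one_right (norm_nonneg _) (hu.2 x).2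

/-- Sequential weak* compactness of `L^∞(ℝ;[0,1])`, obtained from weak compactness in `L²` of the
sequence `rho * u n`. -/
lemma density_subseq (u : ℕ → ℝ → ℝ) (hu : ∀ n, MemU (u n)) :
    ∃ σ : ℕ → ℕ, StrictMono σ ∧ ∃ v : ℝ → ℝ, MemU v ∧ ∀ f : ℝ → ℝ, Integrable f volume →
      Tendsto (fun n => ∫ x, u (σ n) x * f x) atTop (𝓝 (∫ x, v x * f x)) := by
  have : Fact ((2 : ENNReal) ≠ ⊤) := ⟨by norm_num⟩
  set V : ℕ → Lp ℝ 2 (volume : Measure ℝ) := fun n => (hu n).memLp_rho_mul.toLp with hV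
  have hVc : ∀ n, V n =ᵐ[volume] fun x => rho x * u n x := fun n => MemLp.coeFn_toLp _
  obtain ⟨σ, hσ, a, ha⟩ := hilbert_weak_subseq V ‖memLp_rho.toLp‖ (fun n => by
    apply Lp.norm_le_norm_of_ae_le
    filter_upwards [hVc n, memLp_rho.coeFn_toLp] with x h1 h2
    rw [h1, h2, norm_mul, Real.norm_of_nonneg ((hu n).2 x).1]
    exact mul_le_of_le_one_right (norm_nonneg _) ((hu n).2 x).2)
  have hset : ∀ s : Set ℝ, MeasurableSet s → volume s < ⊤ →
      Tendsto (fun n => ∫ x in s, rho x * u (σ n) x) atTop (𝓝 (∫ x in s, a x)) := by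
    intro s hs hμ
    have h := ha (indicatorConstLp 2 hs hμ.ne 1)
    simp only [real_inner_comm (indicatorConstLp 2 hs hμ.ne (1:ℝ)),
      L2.inner_indicatorConstLp_one] at h
    refine h.congr fun n => ?_
    exact integral_congr_ae (ae_restrict_of_ae (hVc (σ n)))
  have hint : ∀ s : Set ℝ, volume s < ⊤ → IntegrableOn a s := fun s hs =>
    integrableOn_Lp_of_measure_ne_top a (by norm_num) hs.ne
  have hrint : Integrable rho := integrable_inv_one_add_sq
  have hruint : ∀ n, Integrable (fun x => rho x * u n x) := fun n => by
    simpa [mul_comm] using (hu n).integrable_mul hrint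
  have ha0 : 0 ≤ᵐ[volume] a := by
    apply ae_nonneg_of_forall_setIntegral_nonneg_of_sigmaFinite (fun s _ h => hint s h)
    intro s hs hμ
    refine ge_of_tendsto (hset s hs hμ) (Eventually.of_forall fun n => ?_)
    exact integral_nonneg fun x => mul_nonneg (rho_pos x).le ((hu _).2 x).1
  have ha1 : 0 ≤ᵐ[volume] fun x => rho x - a x := by
    apply ae_nonneg_of_forall_setIntegral_nonneg_of_sigmaFinite
      (fun s _ h => hrint.integrableOn.sub (hint s h))
    intro s hs hμ
    rw [integral_sub' hrint.integrableOn (hint s hμ), sub_nonneg]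
    refine le_of_tendsto (hset s hs hμ) (Eventually.of_forall fun n => ?_)
    refine setIntegral_mono (hruint _).integrableOn hrint.integrableOn fun x => ?_
    exact mul_le_of_le_one_right (rho_pos x).le ((hu _).2 x).2
  -- Truncation gives a representative with values in `[0,1]` everywhere.
  set v : ℝ → ℝ := fun x => max 0 (min 1 (a x / rho x)) with hv
  have hvU : MemU v := by
    refine ⟨?_, fun x => ⟨le_max_left _ _, max_le zero_le_one (min_le_left _ _)⟩⟩
    exact measurable_const.max (measurable_const.min
      ((Lp.stronglyMeasurable a).measurable.div continuous_rho.measurable))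
  have hva : ∀ᵐ x, v x = a x / rho x := by
    filter_upwards [ha0, ha1] with x h0 h1
    have h1' : a x ≤ rho x := sub_nonneg.1 h1
    rw [hv]
    simp only
    rw [min_eq_right ((div_le_one (rho_pos x)).2 h1'),
      max_eq_right (div_nonneg h0 (rho_pos x).le)]
  have hcc : ∀ f : ℝ → ℝ, Continuous f → HasCompactSupport f →
      Tendsto (fun n => ∫ x, u (σ n) x * f x) atTop (𝓝 (∫ x, v x * f x)) := by
    intro f hf hfs
    have hk : MemLp (fun x => f x / rho x) 2 := by
      have h1 : Continuous (fun x => f x / rho x) :=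
        hf.div continuous_rho fun x => (rho_pos x).ne'
      refine h1.memLp_of_hasCompactSupport ?_
      simp only [div_eq_mul_inv]
      exact hfs.mul_right (f' := fun x => (rho x)⁻¹)
    set k : Lp ℝ 2 (volume : Measure ℝ) := MemLp.toLp _ hk
    have hkc : k =ᵐ[volume] fun x => f x / rho x := MemLp.coeFn_toLp _
    have h := ha k
    simp only [L2.inner_def] at h
    have e1 : ∀ n, ∫ x, inner ℝ (V (σ n) x) (k x) = ∫ x, u (σ n) x * f x := by
      intro n
      refine integral_congr_ae ?_
      filter_upwards [hVc (σ n), hkc] with x h1 h2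
      have := (rho_pos x).ne'
      rw [h1, h2, RCLike.inner_apply, conj_trivial]
      field_simp
    have e2 : ∫ x, inner ℝ (a x) (k x) = ∫ x, v x * f x := by
      refine integral_congr_ae ?_
      filter_upwards [hva, hkc] with x h1 h2
      have := (rho_pos x).ne'
      rw [h1, h2, RCLike.inner_apply, conj_trivial]
      field_simp
    rw [e2] at h
    exact h.congr e1
  refine ⟨σ, hσ, v, hvU, fun f hf => ?_⟩
  rw [Metric.tendsto_atTop]
  intro ε hε
  obtain ⟨g, hgs, hgε, hgc, hgi⟩ :=
    hf.exists_hasCompactSupport_integral_sub_le (show 0 < ε / 3 by linarith)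
  obtain ⟨N, hN⟩ := Metric.tendsto_atTop.1 (hcc g hgc hgs) (ε / 3) (by linarith)
  refine ⟨N, fun n hn => ?_⟩
  have h1 := (abs_le.1 ((hu (σ n)).abs_integral_sub_le hf hgi))
  have h2 := (abs_le.1 (hvU.abs_integral_sub_le hf hgi))
  have h3 := hN n hn
  rw [Real.dist_eq, abs_lt] at h3 ⊢
  constructor <;> linarith [h1.1, h1.2, h2.1, h2.2, h3.1, h3.2]

/-! ### Consequences of finite energy -/

lemma phiOf_one_sub {v : ℝ} : phiOf (1 - v) = - phiOf v := by
  unfold phiOf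
  rw [sub_sub_cancel, ← Real.log_inv, inv_div]

lemma phiOf_pos {v : ℝ} (h0 : 1 / 2 < v) (h1 : v < 1) : 0 < phiOf v := by
  apply Real.log_pos
  rw [lt_div_iff₀ (by linarith)]
  linarith

lemma MemC.range {P : ℝ} {φ : ℝ → ℝ} (h : MemC (-P) P φ) (x : ℝ) : φ x ∈ Icc (-P) P := by
  have hmono : Monotone φ := fun x y hxy => (h.1 x y hxy).1
  exact ⟨hmono.le_of_tendsto h.2.1 x, hmono.ge_of_tendsto h.2.2 x⟩

lemma MemC.exists_zero {P : ℝ} (hP : 0 < P) {φ : ℝ → ℝ} (h : MemC (-P) P φ) :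
    ∃ w, φ w = 0 := by
  have hc := (lip_continuous h.1).continuous
  obtain ⟨a, ha⟩ := (h.2.1.eventually (gt_mem_nhds (show -P < 0 by linarith))).exists
  obtain ⟨b, hb⟩ := (h.2.2.eventually (lt_mem_nhds hP)).exists
  exact mem_range_of_exists_le_of_exists_ge hc ⟨a, ha.le⟩ ⟨b, hb.le⟩

/-- Energy at most `M` forces tails of `φ`, centred at a zero `w`, with a constant depending only
on `M` and `u₊`. -/
lemma energy_tail {up l M w : ℝ} (h0 : 1 / 2 < up) (h1 : up < 1) {u φ : ℝ → ℝ}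
    (hu : MemU u) (hφ : MemC (-phiOf up) (phiOf up) φ) (hw : φ w = 0)
    (hG : Gl (1 - up) up l u φ < (M : EReal)) {y : ℝ} (hy : 0 < y) :
    phiOf up - φ (w + y) ≤
      4 * phiOf up * (M + 2 * phiOf up * (2 - Real.log (kap (phiOf up)))) / kap (phiOf up) / y ∧
    φ (w - y) + phiOf up ≤
      4 * phiOf up * (M + 2 * phiOf up * (2 - Real.log (kap (phiOf up)))) / kap (phiOf up) / y := by
  have hP := phiOf_pos h0 h1
  unfold Gl at hG
  split_ifs at hG with hbc
  · rw [EReal.coe_lt_coe_iff, gg_phiOf (by linarith) h1] at hG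
    simp only [phiOf_one_sub] at hbc
    have hmono : Monotone φ := fun x y hxy => (hφ.1 x y hxy).1
    have hll : -l ≤ l := by
      by_contra! h
      have e1 := (hbc.1 0 (by linarith)).2
      have e2 := (hbc.2 0 (by linarith)).2
      linarith
    have hE := energy_bound hP hu hφ.1 hφ.range hll (hbc.1 _ le_rfl).2 (hbc.2 _ le_rfl).2
    exact tail_bound hP (lip_continuous hφ.1).continuous hmono hφ.range
      (fun x hx => (hbc.1 x hx).2) (fun x hx => (hbc.2 x hx).2) hw (hE.trans (by linarith)) hy
  · exact absurd hG (not_top_lt)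

/-- For `u₋ + u₊ = 1`, any family `{(u_ℓ,φ_ℓ)} ⊂ X` with
`limsup_{ℓ→∞} G_ℓ(u_ℓ,φ_ℓ) < ∞` admits translations `{z_ℓ}` such that the translated family
`{(τ_{z_ℓ} u_ℓ, τ_{z_ℓ} φ_ℓ)}` is precompact in `X`. -/
theorem stmt_13 (um up : ℝ) (h0 : 0 < um) (h1 : um < up) (h2 : up < 1)
    (hsum : um + up = 1)
    (U Φ : ℝ → ℝ → ℝ)
    (hmem : ∀ l, MemX um up (U l) (Φ l))
    (hbd : Filter.limsup (fun l => Gl um up l (U l) (Φ l)) atTop < (⊤ : EReal)) :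
    ∃ z : ℝ → ℝ, ∀ ln : ℕ → ℝ, Tendsto ln atTop atTop →
      ∃ σ : ℕ → ℕ, StrictMono σ ∧ ∃ u φ : ℝ → ℝ, MemX um up u φ ∧
        ConvX (fun n => tau (z (ln (σ n))) (U (ln (σ n))))
              (fun n => tau (z (ln (σ n))) (Φ (ln (σ n)))) u φ := by
  obtain rfl : um = 1 - up := by linarith
  have hup : 1 / 2 < up := by linarith
  have hP := phiOf_pos hup h2
  simp only [MemX, phiOf_one_sub] at hmem ⊢
  obtain ⟨M, hM, -⟩ := EReal.lt_iff_exists_real_btwn.1 hbd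
  have hev := Filter.eventually_lt_of_limsup_lt hM
  choose w hw using fun l => (hmem l).2.exists_zero hP
  refine ⟨fun l => - w l, fun ln hln => ?_⟩
  have htau : ∀ (l : ℝ) (f : ℝ → ℝ) (x : ℝ), tau (- w l) f x = f (w l + x) := by
    intro l f x
    rw [tau, sub_neg_eq_add, add_comm]
  obtain ⟨σ₁, hσ₁, φ, hφ, hφlim⟩ := profile_subseq (P := phiOf up)
    (C := 4 * phiOf up * (M + 2 * phiOf up * (2 - Real.log (kap (phiOf up)))) / kap (phiOf up))
    (fun n => tau (- w (ln n)) (Φ (ln n)))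
    (fun n x y hxy => by
      have := (hmem (ln n)).2.1 (w (ln n) + x) (w (ln n) + y) (by linarith)
      rw [htau, htau]
      exact ⟨this.1, by linarith [this.2]⟩)
    (fun n x => by rw [htau]; exact (hmem (ln n)).2.range _)
    (by
      filter_upwards [hln.eventually hev] with n hn y hy
      rw [htau, htau, ← sub_eq_add_neg]
      exact energy_tail hup h2 (hmem _).1 (hmem _).2 (hw _) hn hy)
  obtain ⟨σ₂, hσ₂, u, hu, hulim⟩ := density_subseq
    (fun n => tau (- w (ln (σ₁ n))) (U (ln (σ₁ n))))
    (fun n => ⟨(hmem _).1.1.comp (measurable_id.sub_const _), fun x => (hmem _).1.2 _⟩)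
  refine ⟨σ₁ ∘ σ₂, hσ₁.comp hσ₂, u, φ, ⟨hu, hφ⟩, hulim, ?_⟩
  exact fun s hs => hσ₂.tendsto_atTop.eventually (hφlim s hs)

end
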